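/- Assume Martin's Axiom for σ-centered posets. If D is a family of tall summable ideals with |D| < 𝔠, then there exists an ultrafilter U on ℕ which is an I-ultrafilter for every I ∈ D but is not rapid. -/

import Mathlib

open Set Filter

/-- The summable ideal determined by `g`. -/
def Ig (g : ℕ → ℝ) : Set (Set ℕ) := {A | Summable (A.indicator g)}

/-- `g` determines a tall summable ideal: positive, divergent series, tends to `0`. -/
def SummableTall (g : ℕ → ℝ) : Prop :=
  (∀ n, 0 < g n) ∧ ¬ Summable g ∧ Tendsto g atTop (nhds 0)

/-- A subset of a poset is centered if every finite subset has a common lower bound. -/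
def Centered {P : Type} [PartialOrder P] (S : Set P) : Prop :=
  ∀ T : Finset P, ↑T ⊆ S → ∃ r : P, ∀ p ∈ T, r ≤ p

/-- A poset is σ-centered if it is a countable union of centered pieces. -/
def SigmaCentered (P : Type) [PartialOrder P] : Prop :=
  ∃ c : P → ℕ, ∀ n : ℕ, Centered {p : P | c p = n}

/-- A filter on a poset: nonempty, upward closed, downward directed. -/
def PosetFilter {P : Type} [PartialOrder P] (G : Set P) : Prop :=
  G.Nonempty ∧ (∀ p ∈ G, ∀ q, p ≤ q → q ∈ G) ∧
    (∀ p ∈ G, ∀ q ∈ G, ∃ r ∈ G, r ≤ p ∧ r ≤ q)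

/-- A dense subset of a poset. -/
def DenseBelow {P : Type} [PartialOrder P] (D : Set P) : Prop :=
  ∀ p : P, ∃ q ∈ D, q ≤ p

/-- Martin's Axiom for σ-centered posets. -/
def MASigmaCentered : Prop :=
  ∀ (P : Type) [PartialOrder P] [Nonempty P], SigmaCentered P →
    ∀ 𝒟 : Set (Set P), Cardinal.mk ↥𝒟 < Cardinal.continuum →
      (∀ D ∈ 𝒟, DenseBelow D) →
      ∃ G : Set P, PosetFilter G ∧ ∀ D ∈ 𝒟, (G ∩ D).Nonempty

/-- `U` is an `I`-ultrafilter: every function maps some member of `U` into `I`. -/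
def IUlt (U : Ultrafilter ℕ) (I : Set (Set ℕ)) : Prop :=
  ∀ F : ℕ → ℕ, ∃ A ∈ U, F '' A ∈ I

/-- `U` is rapid: the enumeration functions of its members form a dominating family. -/
def Rapid (U : Ultrafilter ℕ) : Prop :=
  ∀ f : ℕ → ℕ, ∃ A ∈ U, A.Infinite ∧ ∀ᶠ n in atTop, f n ≤ Nat.nth (· ∈ A) n

/-! ### The combinatorial core -/

lemma comb_core (f : ℕ → ℕ) (g : ℕ → ℝ) (S : Finset ℕ) (m H : ℕ) (ε : ℝ)
    (h1 : ∀ x ∈ S, g (f x) ≤ ε)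
    (h2 : ∀ i ≥ H, g i ≤ 1 / ((m : ℝ) + 1) ^ 2) (h3 : 1 / ((m : ℝ) + 1) ≤ ε)
    (hS : m * (H + m) < S.card) :
    ∃ a ⊆ S, m ≤ a.card ∧ ∑ v ∈ a.image f, g v ≤ ε := by
  classical
  by_cases hV : m ≤ ((S.image f).filter (H ≤ ·)).card
  · obtain ⟨T, hT, hTc⟩ := Finset.exists_subset_card_eq hV
    have hsurj : Set.SurjOn f (S : Set ℕ) (T : Set ℕ) := by
      intro y hy
      have := hT hy
      simp only [Finset.mem_filter, Finset.mem_image] at this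
      obtain ⟨⟨x, hx, rfl⟩, _⟩ := this
      exact ⟨x, hx, rfl⟩
    obtain ⟨u, hus, hinj, himg⟩ := Finset.exists_subset_injOn_image_eq_of_surjOn _ _ hsurj
    refine ⟨u, by exact_mod_cast hus, ?_, ?_⟩
    · have hc : (u.image f).card = m := by rw [himg, hTc]
      rw [← hc]; exact Finset.card_image_le
    · rw [himg]
      have hb : ∑ v ∈ T, g v ≤ ∑ v ∈ T, 1 / ((m : ℝ) + 1) ^ 2 := by
        apply Finset.sum_le_sum
        intro i hi
        exact h2 i (Finset.mem_filter.1 (hT hi)).2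
      rw [Finset.sum_const, hTc, nsmul_eq_mul] at hb
      refine hb.trans (le_trans ?_ h3)
      have hp : (0 : ℝ) < (m : ℝ) + 1 := by positivity
      rw [mul_one_div, div_le_div_iff₀ (by positivity) hp]
      nlinarith
  · push Not at hV
    have hcard : (S.image f).card ≤ H + m := by
      have hsub : S.image f ⊆ Finset.range H ∪ (S.image f).filter (H ≤ ·) := by
        intro y hy
        by_cases hy' : y < H
        · simp [hy']
        · simp only [Finset.mem_union, Finset.mem_filter]
          exact Or.inr ⟨hy, not_lt.1 hy'⟩
      have := (Finset.card_le_card hsub).trans (Finset.card_union_le _ _)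
      rw [Finset.card_range] at this
      omega
    have hpg : (S.image f).card * m < S.card := by
      refine lt_of_le_of_lt ?_ hS
      rw [mul_comm]; exact Nat.mul_le_mul_left _ hcard
    obtain ⟨y, hy, hlt⟩ := Finset.exists_lt_card_fiber_of_mul_lt_card_of_maps_to
      (fun a ha => Finset.mem_image_of_mem f ha) hpg
    refine ⟨S.filter (f · = y), Finset.filter_subset _ _, hlt.le, ?_⟩
    have himg : (S.filter (f · = y)).image f = {y} := by
      ext z
      simp only [Finset.mem_image, Finset.mem_filter, Finset.mem_singleton] at hy ⊢
      constructor
      · rintro ⟨x, ⟨_, h⟩, rfl⟩; exact h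
      · rintro rfl
        obtain ⟨x, hx, hxy⟩ := hy
        exact ⟨x, ⟨hx, hxy⟩, hxy⟩
    rw [himg, Finset.sum_singleton]
    obtain ⟨x, hx, rfl⟩ := Finset.mem_image.1 hy
    exact h1 x hx

/-! ### The ideal -/

/-- A fast growing hierarchy built from `G`. -/
def Phi (G : ℕ → ℕ) : ℕ → ℕ → ℕ
  | 0, n => n
  | k + 1, n => (Phi G k n + 1) * (G (Phi G k n + 1) + (Phi G k n + 1))

lemma Phi_succ_ge (G : ℕ → ℕ) (k n : ℕ) : 2 * Phi G k n + 1 ≤ Phi G (k + 1) n := by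
  rw [Phi]; nlinarith [Nat.zero_le ((Phi G k n + 1) * G (Phi G k n + 1)), Nat.zero_le (Phi G k n)]

lemma Phi_mono (G : ℕ → ℕ) (n : ℕ) : Monotone (fun k => Phi G k n) :=
  monotone_nat_of_le_succ fun k => by have := Phi_succ_ge G k n; omega

lemma Phi_ge (G : ℕ → ℕ) (k n : ℕ) : n ≤ Phi G k n := Phi_mono G n (Nat.zero_le k)

/-- The lengths of the initial segments used to measure sets. -/
def aseq (G : ℕ → ℕ) (n : ℕ) : ℕ := Phi G n n + 1

open Classical in
/-- The number of elements of `A` below `n`. -/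
noncomputable def cnt (A : Set ℕ) (n : ℕ) : ℕ := ((Finset.range n).filter (· ∈ A)).card

lemma cnt_mono {A B : Set ℕ} (h : A ⊆ B) (n : ℕ) : cnt A n ≤ cnt B n := by
  classical
  apply Finset.card_le_card
  intro x hx
  simp only [Finset.mem_filter] at hx ⊢
  exact ⟨hx.1, h hx.2⟩

lemma cnt_union (A B : Set ℕ) (n : ℕ) : cnt (A ∪ B) n ≤ cnt A n + cnt B n := by
  classical
  refine le_trans (Finset.card_le_card ?_) (Finset.card_union_le _ _)
  intro x hx
  simp only [Finset.mem_filter, Finset.mem_union, Set.mem_union] at hx ⊢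
  tauto

/-- The ideal avoided by the ultrafilter. -/
def JSmall (G : ℕ → ℕ) (A : Set ℕ) : Prop :=
  ∃ k, ∀ᶠ n in atTop, cnt A (aseq G n) ≤ Phi G k n

lemma JSmall.mono {G : ℕ → ℕ} {A B : Set ℕ} (h : A ⊆ B) (hB : JSmall G B) : JSmall G A := by
  obtain ⟨k, hk⟩ := hB
  exact ⟨k, hk.mono fun n hn => (cnt_mono h _).trans hn⟩

lemma JSmall.union {G : ℕ → ℕ} {A B : Set ℕ} (hA : JSmall G A) (hB : JSmall G B) :
    JSmall G (A ∪ B) := by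
  obtain ⟨k, hk⟩ := hA
  obtain ⟨l, hl⟩ := hB
  refine ⟨max k l + 1, ?_⟩
  filter_upwards [hk, hl] with n h1 h2
  have h3 := cnt_union A B (aseq G n)
  have h4 := Phi_succ_ge G (max k l) n
  have h5 : Phi G k n ≤ Phi G (max k l) n := Phi_mono G n (le_max_left k l)
  have h6 : Phi G l n ≤ Phi G (max k l) n := Phi_mono G n (le_max_right k l)
  omega

lemma JSmall.finite {G : ℕ → ℕ} {A : Set ℕ} (hA : A.Finite) : JSmall G A := by
  classical
  refine ⟨0, ?_⟩
  filter_upwards [eventually_ge_atTop hA.toFinset.card] with n hn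
  refine le_trans (Finset.card_le_card ?_) hn
  intro x hx
  simpa using (Finset.mem_filter.1 hx).2

lemma not_small_univ (G : ℕ → ℕ) : ¬ JSmall G univ := by
  rintro ⟨k, hk⟩
  obtain ⟨n, hn, hkn⟩ := (hk.and (eventually_ge_atTop k)).exists
  have h1 : cnt univ (aseq G n) = aseq G n := by simp [cnt]
  rw [h1, aseq] at hn
  have : Phi G k n ≤ Phi G n n := Phi_mono G n hkn
  omega

/-- The filter dual to the ideal of small sets. -/
def JF (G : ℕ → ℕ) : Filter ℕ where
  sets := {A | JSmall G Aᶜ}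
  univ_sets := by
    simpa using JSmall.finite (G := G) Set.finite_empty
  sets_of_superset := by
    intro A B hA hAB
    exact JSmall.mono (compl_subset_compl.2 hAB) hA
  inter_sets := by
    intro A B hA hB
    change JSmall G (A ∩ B)ᶜ
    rw [compl_inter]
    exact JSmall.union hA hB

lemma mem_JF {G : ℕ → ℕ} {A : Set ℕ} : A ∈ JF G ↔ JSmall G Aᶜ := Iff.rfl

lemma JF_neBot (G : ℕ → ℕ) : (JF G).NeBot := by
  refine ⟨fun h => not_small_univ G ?_⟩
  have : (∅ : Set ℕ) ∈ JF G := by rw [h]; trivial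
  simpa [mem_JF] using this

lemma not_small_of_mem {G : ℕ → ℕ} {L : Filter ℕ} [L.NeBot] (hL : L ≤ JF G) {A : Set ℕ}
    (hA : A ∈ L) : ¬ JSmall G A := by
  intro h
  have h1 : Aᶜ ∈ L := hL (by rw [mem_JF, compl_compl]; exact h)
  have h2 := inter_mem hA h1
  rw [inter_compl_self] at h2
  exact empty_notMem L h2

/-! ### Ultrafilters avoiding the ideal are not rapid -/

lemma not_rapid_of_le {G : ℕ → ℕ} {U : Ultrafilter ℕ} (hU : (U : Filter ℕ) ≤ JF G) :
    ¬ Rapid U := by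
  classical
  intro h
  obtain ⟨A, hA, hinf, hev⟩ := h (aseq G)
  refine not_small_of_mem hU hA ⟨0, ?_⟩
  filter_upwards [hev] with n hn
  change cnt A (aseq G n) ≤ n
  have h1 : Nat.count (· ∈ A) (Nat.nth (· ∈ A) n) = n :=
    Nat.count_nth_of_infinite (p := (· ∈ A)) hinf n
  have h2 := Nat.count_monotone (· ∈ A) hn
  rw [h1, Nat.count_eq_card_filter_range] at h2
  unfold cnt
  convert h2

lemma le_cofinite_of_le {G : ℕ → ℕ} {L : Filter ℕ} (hL : L ≤ JF G) : L ≤ cofinite := by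
  intro A hA
  exact hL (JSmall.finite (mem_cofinite.1 hA))

/-! ### Consequences of Martin's axiom -/

lemma sigmaCentered_of_countable (P : Type) [PartialOrder P] [Nonempty P] [Countable P] :
    SigmaCentered P := by
  obtain ⟨c, hc⟩ := exists_injective_nat P
  refine ⟨c, fun n T hT => ?_⟩
  rcases T.eq_empty_or_nonempty with rfl | ⟨p, hp⟩
  · exact ⟨Classical.arbitrary P, by simp⟩
  · refine ⟨p, fun q hq => ?_⟩
    have h1 : c p = n := hT hp
    have h2 : c q = n := hT hq
    exact (hc (h1.trans h2.symm)).le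

/-- Hechler forcing. -/
structure Hech : Type where
  /-- length of the stem -/
  len : ℕ
  /-- the promise -/
  fn : ℕ → ℕ

instance : PartialOrder Hech where
  le q p := p.len ≤ q.len ∧ (∀ i, p.fn i ≤ q.fn i) ∧ ∀ i < p.len, q.fn i = p.fn i
  le_refl p := ⟨le_rfl, fun _ => le_rfl, fun _ _ => rfl⟩
  le_trans r q p h1 h2 := ⟨h2.1.trans h1.1, fun i => (h2.2.1 i).trans (h1.2.1 i),
    fun i hi => (h1.2.2 i (hi.trans_le h2.1)).trans (h2.2.2 i hi)⟩
  le_antisymm p q h1 h2 := by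
    obtain ⟨n, f⟩ := p
    obtain ⟨m, f'⟩ := q
    have e1 : n = m := le_antisymm h2.1 h1.1
    have e2 : f = f' := funext fun i => le_antisymm (h2.2.1 i) (h1.2.1 i)
    rw [e1, e2]

lemma Hech.le_iff {p q : Hech} :
    q ≤ p ↔ p.len ≤ q.len ∧ (∀ i, p.fn i ≤ q.fn i) ∧ ∀ i < p.len, q.fn i = p.fn i := Iff.rfl

lemma Hech.sigmaCentered : SigmaCentered Hech := by
  refine ⟨fun p => Encodable.encode ((List.range p.len).map p.fn), fun n T hT => ?_⟩
  rcases T.eq_empty_or_nonempty with rfl | ⟨p, hp⟩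
  · exact ⟨⟨0, fun _ => 0⟩, by simp⟩
  · have key : ∀ q ∈ T, q.len = p.len ∧ ∀ i < p.len, q.fn i = p.fn i := by
      intro q hq
      have h1 : Encodable.encode ((List.range p.len).map p.fn) = n := hT hp
      have h2 : Encodable.encode ((List.range q.len).map q.fn) = n := hT hq
      have h3 := Encodable.encode_injective (h2.trans h1.symm)
      have h4 : q.len = p.len := by simpa using congrArg List.length h3
      refine ⟨h4, fun i hi => ?_⟩
      rw [h4] at h3
      exact List.map_inj_left.1 h3 i (List.mem_range.2 hi)
    refine ⟨⟨p.len, fun i => T.sup fun q => q.fn i⟩, fun q hq => ?_⟩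
    rw [Hech.le_iff]
    refine ⟨(key q hq).1.le, fun i => Finset.le_sup (f := fun q : Hech => q.fn i) hq,
      fun i hi => ?_⟩
    have hi' : i < p.len := by rw [← (key q hq).1]; exact hi
    apply le_antisymm
    · apply Finset.sup_le
      intro q' hq'
      rw [(key q' hq').2 i hi', (key q hq).2 i hi']
    · exact Finset.le_sup (f := fun q : Hech => q.fn i) hq

lemma exists_dominating (hMA : MASigmaCentered) {ι : Type} (hι : Cardinal.mk ι < Cardinal.continuum)
    (h : ι → ℕ → ℕ) : ∃ G : ℕ → ℕ, ∀ i, ∀ᶠ n in atTop, h i n ≤ G n := by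
  classical
  let Dn : ι ⊕ ℕ → Set Hech := fun x => match x with
    | Sum.inl i => {p | ∀ n ≥ p.len, h i n ≤ p.fn n}
    | Sum.inr m => {p | m ≤ p.len}
  have : Nonempty Hech := ⟨⟨0, fun _ => 0⟩⟩
  obtain ⟨F, hF, hFD⟩ := hMA Hech Hech.sigmaCentered (Set.range Dn)
    (by
      refine Cardinal.mk_range_le.trans_lt ?_
      rw [Cardinal.mk_sum]
      simp only [Cardinal.lift_id]
      refine Cardinal.add_lt_of_lt Cardinal.aleph0_le_continuum hι ?_
      simpa using Cardinal.aleph0_lt_continuum)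
    (by
      rintro _ ⟨x, rfl⟩ p
      rcases x with i | m
      · refine ⟨⟨p.len, fun n => if n < p.len then p.fn n else max (p.fn n) (h i n)⟩, ?_, ?_⟩
        · intro n hn
          have hn' : ¬ n < p.len := not_lt.2 hn
          simp [hn']
        · rw [Hech.le_iff]
          refine ⟨le_rfl, fun n => ?_, fun n hn => ?_⟩
          · dsimp only; split_ifs <;> simp
          · simp [hn]
      · refine ⟨⟨max m p.len, p.fn⟩, (le_max_left m p.len : m ≤ max m p.len), ?_⟩
        rw [Hech.le_iff]
        exact ⟨le_max_right _ _, fun _ => le_rfl, fun _ _ => rfl⟩)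
  have hlen : ∀ n : ℕ, ∃ q ∈ F, n < q.len := by
    intro n
    obtain ⟨q, hq, hq'⟩ := hFD _ ⟨Sum.inr (n + 1), rfl⟩
    exact ⟨q, hq, hq'⟩
  choose q hqF hq using hlen
  refine ⟨fun n => (q n).fn n, fun i => ?_⟩
  obtain ⟨p, hp, hp'⟩ := hFD _ ⟨Sum.inl i, rfl⟩
  filter_upwards [eventually_ge_atTop p.len] with n hn
  obtain ⟨r, _, hrp, hrq⟩ := hF.2.2 p hp (q n) (hqF n)
  rw [Hech.le_iff] at hrp hrq
  rw [← hrq.2.2 n (hq n)]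
  exact (hp' n hn).trans (hrp.2.1 n)

lemma mk_finset_lt_continuum {ι : Type} (hι : Cardinal.mk ι < Cardinal.continuum) :
    Cardinal.mk (Finset ι) < Cardinal.continuum := by
  cases finite_or_infinite ι
  · exact (Cardinal.mk_le_aleph0 (α := Finset ι)).trans_lt Cardinal.aleph0_lt_continuum
  · rwa [Cardinal.mk_finset_of_infinite]

/-- The countable poset of finite approximations. -/
abbrev Approx (f : ℕ → ℕ) (g : ℕ → ℝ) : Type :=
  {s : (Finset ℕ)ᵒᵈ // ∑ v ∈ (OrderDual.ofDual s).image f, g v < 1}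

lemma step (hMA : MASigmaCentered) (G : ℕ → ℕ) (g : ℕ → ℝ) (hg : SummableTall g) (hh : ℕ → ℕ)
    (hh1 : ∀ m, ∀ i ≥ hh m, g i ≤ 1 / ((m : ℝ) + 1) ^ 2)
    (hh2 : ∀ᶠ m in atTop, hh m ≤ G m) (f : ℕ → ℕ) {ι : Type}
    (hι : Cardinal.mk ι < Cardinal.continuum) (A : ι → Set ℕ)
    (hne : (JF G ⊓ ⨅ i, 𝓟 (A i)).NeBot) :
    ∃ B : Set ℕ, f '' B ∈ Ig g ∧ (JF G ⊓ (⨅ i, 𝓟 (A i)) ⊓ 𝓟 B).NeBot := by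
  classical
  by_cases hcase : ∃ v, (JF G ⊓ (⨅ i, 𝓟 (A i)) ⊓ 𝓟 (f ⁻¹' {v})).NeBot
  · obtain ⟨v, hv⟩ := hcase
    refine ⟨f ⁻¹' {v}, ?_, hv⟩
    have hfin : (f '' (f ⁻¹' {v})).Finite :=
      (Set.finite_singleton v).subset (Set.image_preimage_subset _ _)
    refine summable_of_hasFiniteSupport (hfin.subset ?_)
    exact Set.support_indicator_subset
  push Not at hcase
  set L := JF G ⊓ ⨅ i, 𝓟 (A i) with hLdef
  have hLJ : L ≤ JF G := inf_le_left
  have hM : ∀ M : ℕ, {x | M ≤ f x} ∈ L := by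
    intro M
    induction M with
    | zero => simp
    | succ M ih =>
      have h1 : (f ⁻¹' {M})ᶜ ∈ L := by
        rw [mem_iff_inf_principal_compl, compl_compl]
        simpa [not_neBot] using hcase M
      filter_upwards [ih, h1] with x hx hx'
      have : f x ≠ M := hx'
      have hx2 : M ≤ f x := hx
      change M + 1 ≤ f x
      omega
  let Bt : Finset ι → Set ℕ := fun t => ⋂ i ∈ t, A i
  have hBt : ∀ t, Bt t ∈ L := by
    intro t
    refine (biInter_finset_mem t).2 fun i _ => ?_
    have : L ≤ 𝓟 (A i) := inf_le_right.trans (iInf_le _ i)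
    exact this (mem_principal_self _)
  let Dn : Finset ι × ℕ × ℕ → Set (Approx f g) := fun x =>
    {s | ∃ n ≥ x.2.2, Phi G x.2.1 n <
      cnt ((↑(OrderDual.ofDual s.1) : Set ℕ) ∩ Bt x.1) (aseq G n)}
  have hPne : Nonempty (Approx f g) := ⟨⟨OrderDual.toDual ∅, by simp⟩⟩
  have hPc : Countable (Approx f g) := by
    have : Countable (Finset ℕ)ᵒᵈ := inferInstanceAs (Countable (Finset ℕ))
    infer_instance
  obtain ⟨F, hF, hFD⟩ := hMA (Approx f g) (sigmaCentered_of_countable _) (Set.range Dn)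
    (by
      refine Cardinal.mk_range_le.trans_lt ?_
      rw [Cardinal.mk_prod]
      simp only [Cardinal.lift_id]
      refine Cardinal.mul_lt_of_lt Cardinal.aleph0_le_continuum (mk_finset_lt_continuum hι) ?_
      exact (Cardinal.mk_le_aleph0 (α := ℕ × ℕ)).trans_lt Cardinal.aleph0_lt_continuum)
    (by
      rintro _ ⟨⟨t, k, N⟩, rfl⟩ ⟨s, hs⟩
      obtain ⟨s, rfl⟩ := OrderDual.toDual.surjective s
      simp only [OrderDual.ofDual_toDual] at hs
      obtain ⟨ε, hε0, hε⟩ : ∃ ε : ℝ, 0 < ε ∧ ∑ v ∈ s.image f, g v + ε < 1 :=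
        ⟨(1 - ∑ v ∈ s.image f, g v) / 2, by linarith, by linarith⟩
      obtain ⟨M, hMε⟩ := eventually_atTop.1 (hg.2.2.eventually (eventually_lt_nhds hε0))
      have hBig : Bt t ∩ {x | M ≤ f x} ∈ L := inter_mem (hBt t) (hM M)
      have hns : ∃ᶠ n in atTop, ¬ cnt (Bt t ∩ {x | M ≤ f x}) (aseq G n) ≤ Phi G (k + 1) n := by
        intro hcon
        exact not_small_of_mem hLJ hBig ⟨k + 1, by simpa using hcon⟩
      have htend : Tendsto (fun n => Phi G k n + 1) atTop atTop :=
        tendsto_atTop_mono (fun n => (Phi_ge G k n).trans (Nat.le_succ _)) tendsto_id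
      have hsmall : ∀ᶠ m : ℕ in atTop, 1 / ((m : ℝ) + 1) < ε :=
        tendsto_one_div_add_atTop_nhds_zero_nat.eventually (eventually_lt_nhds hε0)
      obtain ⟨n, hn, hn1, hn2, hn3⟩ := (hns.and_eventually ((htend.eventually hh2).and
        ((htend.eventually hsmall).and (eventually_ge_atTop N)))).exists
      set m := Phi G k n + 1 with hm
      rw [not_le, Phi, ← hm] at hn
      obtain ⟨a, haS, ham, hasum⟩ := comb_core f g
        ((Finset.range (aseq G n)).filter (· ∈ Bt t ∩ {x | M ≤ f x})) m (hh m) ε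
        (by
          intro x hx
          exact (hMε _ (Finset.mem_filter.1 hx).2.2).le)
        (hh1 m) hn2.le
        (by
          refine lt_of_le_of_lt (Nat.mul_le_mul_left _ (Nat.add_le_add_right hn1 _)) ?_
          refine hn.trans_eq ?_
          unfold cnt
          congr!)
      refine ⟨⟨OrderDual.toDual (s ∪ a), ?_⟩, ⟨n, hn3, ?_⟩, ?_⟩
      · simp only [OrderDual.ofDual_toDual]
        rw [Finset.image_union]
        have h1 := Finset.sum_union_inter (s₁ := s.image f) (s₂ := a.image f) (f := g)
        have h2 : 0 ≤ ∑ v ∈ s.image f ∩ a.image f, g v :=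
          Finset.sum_nonneg fun i _ => (hg.1 i).le
        linarith
      · simp only [OrderDual.ofDual_toDual]
        have : a.card ≤ cnt ((↑(s ∪ a) : Set ℕ) ∩ Bt t) (aseq G n) := by
          unfold cnt
          apply Finset.card_le_card
          intro x hx
          have := Finset.mem_filter.1 (haS hx)
          have hx2 : x ∈ (↑(s ∪ a) : Set ℕ) ∩ Bt t := ⟨by simp [hx], this.2.1⟩
          simp only [Finset.mem_filter]
          exact ⟨this.1, hx2⟩
        omega
      · change OrderDual.toDual (s ∪ a) ≤ OrderDual.toDual s
        rw [OrderDual.toDual_le_toDual]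
        exact Finset.subset_union_left)
  let B : Set ℕ := {x | ∃ p ∈ F, x ∈ OrderDual.ofDual p.1}
  -- finite subsets of `B` are contained in a single condition
  have hfinB : ∀ w : Finset ℕ, (∀ x ∈ w, x ∈ f '' B) →
      ∃ p ∈ F, w ⊆ (OrderDual.ofDual p.1).image f := by
    intro w
    induction w using Finset.induction_on with
    | empty =>
      intro _
      obtain ⟨p, hp⟩ := hF.1
      exact ⟨p, hp, by simp⟩
    | insert y w _ ih =>
      intro hw
      obtain ⟨p, hp, hpw⟩ := ih fun x hx => hw x (Finset.mem_insert_of_mem hx)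
      obtain ⟨x, ⟨q, hq, hxq⟩, hxy⟩ := hw y (Finset.mem_insert_self _ _)
      obtain ⟨r, hr, hrp, hrq⟩ := hF.2.2 p hp q hq
      have hrp' : OrderDual.ofDual p.1 ⊆ OrderDual.ofDual r.1 := hrp
      have hrq' : OrderDual.ofDual q.1 ⊆ OrderDual.ofDual r.1 := hrq
      refine ⟨r, hr, Finset.insert_subset ?_ (hpw.trans (Finset.image_subset_image hrp'))⟩
      exact Finset.mem_image.2 ⟨x, hrq' hxq, hxy⟩
  refine ⟨B, ?_, ?_⟩
  · change Summable ((f '' B).indicator g)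
    refine summable_of_sum_le (c := 1) (fun i => Set.indicator_nonneg (fun i _ => (hg.1 i).le) i) ?_
    intro u
    obtain ⟨p, hp, hpw⟩ := hfinB (u.filter (· ∈ f '' B)) fun x hx => (Finset.mem_filter.1 hx).2
    have h1 : ∑ x ∈ u, (f '' B).indicator g x = ∑ x ∈ u.filter (· ∈ f '' B), g x := by
      rw [Finset.sum_filter]
      exact Finset.sum_congr rfl fun x _ => by rw [Set.indicator_apply]
    rw [h1]
    exact (Finset.sum_le_sum_of_subset_of_nonneg hpw fun i _ _ => (hg.1 i).le).trans p.2.le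
  · rw [inf_principal_neBot_iff]
    intro W hW
    by_contra hempty
    rw [Set.not_nonempty_iff_eq_empty] at hempty
    obtain ⟨C, hC, E, hE, rfl⟩ := mem_inf_iff.1 hW
    obtain ⟨t, htfin, htE⟩ := (hasBasis_iInf_principal_finite A).mem_iff.1 hE
    have hsub : B ∩ Bt htfin.toFinset ⊆ Cᶜ := by
      rintro x ⟨hxB, hxt⟩ hxC
      have hxE : x ∈ E := htE (by simpa [Bt] using hxt)
      have : x ∈ C ∩ E ∩ B := ⟨⟨hxC, hxE⟩, hxB⟩
      rw [hempty] at this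
      exact this
    obtain ⟨k, hk⟩ := JSmall.mono hsub (mem_JF.1 hC)
    obtain ⟨N, hN⟩ := eventually_atTop.1 hk
    obtain ⟨p, hp, n, hn, hlt⟩ := hFD _ ⟨(htfin.toFinset, k, N), rfl⟩
    have h1 := hN n hn
    have h2 : cnt ((↑(OrderDual.ofDual p.1) : Set ℕ) ∩ Bt htfin.toFinset) (aseq G n) ≤
        cnt (B ∩ Bt htfin.toFinset) (aseq G n) :=
      cnt_mono (Set.inter_subset_inter_left _ fun x hx => (show x ∈ B from ⟨p, hp, hx⟩)) _
    simp only at hlt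
    omega

/-! ### The transfinite recursion -/

lemma recursion {X : Type} (r : X → X → Prop) [IsWellOrder X r] (J : Filter ℕ) (hJ : J.NeBot)
    (P : X → Set ℕ → Prop)
    (hstep : ∀ x, ∀ A : {y // r y x} → Set ℕ, (J ⊓ ⨅ i, 𝓟 (A i)).NeBot →
      ∃ B, P x B ∧ (J ⊓ (⨅ i, 𝓟 (A i)) ⊓ 𝓟 B).NeBot) :
    ∃ U : Ultrafilter ℕ, (U : Filter ℕ) ≤ J ∧ ∀ x, ∃ B ∈ U, P x B := by
  classical
  have wf : WellFounded r := IsWellFounded.wf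
  let Q : ∀ x, ({y // r y x} → Set ℕ) → Set ℕ → Prop := fun x A B =>
    P x B ∧ (J ⊓ (⨅ i, 𝓟 (A i)) ⊓ 𝓟 B).NeBot
  let rec_step : ∀ x, (∀ y, r y x → Set ℕ) → Set ℕ := fun x A =>
    if h : ∃ B, Q x (fun i => A i.1 i.2) B then h.choose else univ
  let S : X → Set ℕ := wf.fix rec_step
  have hS : ∀ x, S x = rec_step x (fun y _ => S y) := fun x => wf.fix_eq rec_step x
  have hS' : ∀ x, (J ⊓ ⨅ i : {y // r y x}, 𝓟 (S i)).NeBot →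
      P x (S x) ∧ (J ⊓ (⨅ i : {y // r y x}, 𝓟 (S i)) ⊓ 𝓟 (S x)).NeBot := by
    intro x hx
    have hex : ∃ B, Q x (fun i => S i.1) B := hstep x _ hx
    have h1 : S x = hex.choose := by
      rw [hS x]; exact dif_pos hex
    rw [h1]
    exact hex.choose_spec
  -- the closed initial segments
  let L : X → Filter ℕ := fun x => J ⊓ (⨅ i : {y // r y x}, 𝓟 (S i)) ⊓ 𝓟 (S x)
  have hLle : ∀ x y, (r y x ∨ y = x) → L x ≤ 𝓟 (S y) := by
    rintro x y (h | rfl)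
    · exact inf_le_left.trans (inf_le_right.trans (iInf_le (fun i : {y // r y x} => 𝓟 (S i)) ⟨y, h⟩))
    · exact inf_le_right
  have hLJ : ∀ x, L x ≤ J := fun x => inf_le_left.trans inf_le_left
  have hLanti : ∀ x y, (r y x ∨ y = x) → L x ≤ L y := by
    intro x y h
    refine le_inf (le_inf (hLJ x) (le_iInf fun z => hLle x z ?_)) (hLle x y h)
    rcases h with h | rfl
    · exact Or.inl (_root_.trans z.2 h)
    · exact Or.inl z.2
  have hdir : ∀ p : X → Prop, Directed (· ≥ ·) (fun i : {y // p y} => L i) := by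
    rintro p ⟨a, ha⟩ ⟨b, hb⟩
    rcases trichotomous_of r a b with h | h | h
    · exact ⟨⟨b, hb⟩, hLanti b a (Or.inl h), le_rfl⟩
    · exact ⟨⟨b, hb⟩, hLanti b a (Or.inr h), le_rfl⟩
    · exact ⟨⟨a, ha⟩, le_rfl, hLanti a b (Or.inl h)⟩
  have hgen : ∀ p : X → Prop, (∀ y, p y → (L y).NeBot) →
      (J ⊓ ⨅ i : {y // p y}, 𝓟 (S i)).NeBot := by
    intro p hp
    by_cases hemp : Nonempty {y // p y}
    · have h1 : (⨅ i : {y // p y}, L i).NeBot :=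
        iInf_neBot_of_directed' (hdir p) fun i => hp i.1 i.2
      refine h1.mono (le_inf ((iInf_le _ hemp.some).trans (hLJ _)) ?_)
      exact iInf_mono fun i => hLle _ _ (Or.inr rfl)
    · rw [not_nonempty_iff] at hemp
      rw [iInf_of_empty, inf_top_eq]
      exact hJ
  have hall : ∀ x, (L x).NeBot := by
    intro x
    induction x using wf.induction with
    | _ x ih => exact (hS' x (hgen _ ih)).2
  have hfin := hgen (fun _ => True) fun y _ => hall y
  refine ⟨Ultrafilter.of (J ⊓ ⨅ i : {y : X // True}, 𝓟 (S i)), (Ultrafilter.of_le _).trans inf_le_left, fun x => ⟨S x, ?_, ?_⟩⟩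
  · have h1 := (Ultrafilter.of_le (J ⊓ ⨅ i : {y : X // True}, 𝓟 (S i))).trans
      (inf_le_right.trans (iInf_le (fun i : {y : X // True} => 𝓟 (S i)) ⟨x, trivial⟩))
    exact h1 (mem_principal_self _)
  · exact (hS' x (hgen _ fun y _ => hall y)).1

theorem many_ideals_not_rapid (hMA : MASigmaCentered) (D : Set (Set (Set ℕ)))
    (hD : ∀ I ∈ D, ∃ g : ℕ → ℝ, SummableTall g ∧ I = Ig g)
    (hcard : Cardinal.mk ↥D < Cardinal.continuum) :
    ∃ U : Ultrafilter ℕ, (↑U : Filter ℕ) ≤ Filter.cofinite ∧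
      (∀ I ∈ D, IUlt U I) ∧ ¬ Rapid U := by
  classical
  choose! g hg using hD
  have hex : ∀ (I : ↥D) (m : ℕ), ∃ M, ∀ i ≥ M, g I i ≤ 1 / ((m : ℝ) + 1) ^ 2 := by
    intro I m
    have hpos : (0 : ℝ) < 1 / ((m : ℝ) + 1) ^ 2 := by positivity
    obtain ⟨M, hM⟩ := eventually_atTop.1
      ((hg I I.2).1.2.2.eventually (eventually_lt_nhds hpos))
    exact ⟨M, fun i hi => (hM i hi).le⟩
  choose hh hh1 using hex
  obtain ⟨G, hG⟩ := exists_dominating hMA hcard hh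
  have hX : Cardinal.mk ((ℕ → ℕ) × ↥D) ≤ Cardinal.continuum := by
    rw [Cardinal.mk_prod]
    simp only [Cardinal.lift_id]
    refine (mul_le_mul' (le_of_eq ?_) hcard.le).trans_eq Cardinal.continuum_mul_self
    simp
  obtain ⟨r, hr, hrord⟩ := Cardinal.exists_ord_eq ((ℕ → ℕ) × ↥D)
  obtain ⟨U, hUJ, hU⟩ := recursion r (JF G) (JF_neBot G)
    (fun x B => x.1 '' B ∈ Ig (g x.2)) (by
      intro x A hA
      refine step hMA G (g x.2) (hg _ x.2.2).1 (hh x.2) (hh1 x.2) (hG x.2) x.1 ?_ A hA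
      have := Cardinal.card_typein_lt x hrord
      exact lt_of_lt_of_le this hX)
  refine ⟨U, le_cofinite_of_le hUJ, ?_, not_rapid_of_le hUJ⟩
  intro I hI F
  obtain ⟨B, hB, hFB⟩ := hU (F, ⟨I, hI⟩)
  refine ⟨B, hB, ?_⟩
  rw [(hg I hI).2]
  exact hFB
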